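/- arXiv:1601.07805 — 2 statements merged into one kernel-verified Lean document; each statement's English description precedes it below -/
import Mathlib

section
/- Let m > 0, g < h be integers with gcd(g,m) = gcd(h,m) = 1, and consider the cone σ^∨ = {r ∈ ℚ² : ⟨(g,m),r⟩ ≥ 0 and ⟨(h,m),r⟩ ≥ 0} dual to the cone over the interval [g/m, h/m]. Then the element [0,1] is irreducible in the semigroup σ^∨ ∩ ℤ² (i.e., it is not the sum of two nonzero elements of σ^∨ ∩ ℤ²) if and only if there exists an integer strictly between g/m and h/m. -/
/-- Membership in σ^∨ ∩ ℤ² for the cone over the interval [g/m, h/m]. -/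
def inDualCone (g h m : ℤ) (r : ℤ × ℤ) : Prop :=
  0 ≤ g * r.1 + m * r.2 ∧ 0 ≤ h * r.1 + m * r.2

/-- the central degree [0,1] is irreducible in the semigroup
σ^∨ ∩ ℤ² if and only if the interval [g/m, h/m] contains an integer in its
interior (groundedness). -/
theorem stmt4 (g h m : ℤ) (hm : 0 < m) (hgh : g < h)
    (hg : Int.gcd g m = 1) (hh : Int.gcd h m = 1) :
    (¬ ∃ s t : ℤ × ℤ, inDualCone g h m s ∧ inDualCone g h m t ∧
        s ≠ 0 ∧ t ≠ 0 ∧ s + t = (0, 1))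
    ↔ ∃ z : ℤ, (g : ℚ) / m < z ∧ (z : ℚ) < (h : ℚ) / m := by
  have hmq : (0 : ℚ) < m := by exact_mod_cast hm
  have key : (∃ z : ℤ, (g : ℚ) / m < z ∧ (z : ℚ) < (h : ℚ) / m) ↔
      ∃ z : ℤ, g < z * m ∧ z * m < h := by
    refine exists_congr fun z => ?_
    rw [div_lt_iff₀ hmq, lt_div_iff₀ hmq]
    norm_cast
  rw [key]
  constructor
  · intro hn
    by_contra hz
    apply hn
    have h1 := Int.emod_nonneg g hm.ne'
    have h2 := Int.emod_lt_of_pos g hm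
    have h3 := Int.emod_add_mul_ediv g m
    have h4 : h ≤ (g / m + 1) * m := by
      by_contra hc
      exact hz ⟨g / m + 1, by linarith, by linarith⟩
    refine ⟨(1, -(g / m)), (-1, 1 + g / m), ⟨?_, ?_⟩, ⟨?_, ?_⟩, by simp, by simp, by simp⟩ <;>
      simp only <;> linarith
  · rintro ⟨z, hz1, hz2⟩ ⟨⟨a, b⟩, ⟨c, d⟩, ⟨h1, h2⟩, ⟨h3, h4⟩, hs, ht, hst⟩
    simp only [Prod.mk_add_mk, Prod.mk.injEq] at hst
    obtain ⟨hc, hd⟩ := hst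
    obtain rfl : c = -a := by linarith
    obtain rfl : d = 1 - b := by linarith
    simp only at h1 h2 h3 h4
    rcases lt_trichotomy a 0 with ha | rfl | ha
    · have e1 : 0 < m * (z * a + b) := by nlinarith
      have e2 : m * (z * a + b) < m * 1 := by nlinarith
      have e3 := pos_of_mul_pos_right e1 hm.le
      have e4 := lt_of_mul_lt_mul_left e2 hm.le
      omega
    · have e1 : 0 ≤ b := by
        by_contra hb
        nlinarith
      have e2 : b ≤ 1 := by
        by_contra hb
        nlinarith
      have : b = 0 ∨ b = 1 := by omega
      rcases this with rfl | rfl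
      · exact hs rfl
      · exact ht rfl
    · have e1 : 0 < m * (z * a + b) := by nlinarith
      have e2 : m * (z * a + b) < m * 1 := by nlinarith
      have e3 := pos_of_mul_pos_right e1 hm.le
      have e4 := lt_of_mul_lt_mul_left e2 hm.le
      omega
end

section
/- Let E = {r¹,...,rᵉ} ⊆ ℤ² (e ≥ 4) be the set of lattice points, in order, on the compact edges of conv(σ^∨ ∩ ℤ² \ {0}) for a two-dimensional cone σ, satisfying r^{i-1} + r^{i+1} = a_i·r^i with integers a_i ≥ 2 for 2 ≤ i ≤ e-1. Suppose r^c is the central degree (so r¹ + rᵉ ∈ ℕ·r^c). If r^i, r^j ∈ E with i < c < j and (a_c - 1)·r^c - (r^i + r^j) ∈ σ^∨, then a contradiction follows; i.e., no two Hilbert basis elements r^i, r^j with i < c < j satisfy r^i + r^j ≤_{σ^∨} (a_c-1)·r^c. -/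
/-- The standard pairing on ℤ². -/
def pairZ (a b : ℤ × ℤ) : ℤ := a.1 * b.1 + a.2 * b.2

/-- Membership in the dual cone σ^∨ of σ = ⟨α,β⟩. -/
def inDual (α β : ℤ × ℤ) (r : ℤ × ℤ) : Prop :=
  0 ≤ pairZ α r ∧ 0 ≤ pairZ β r

theorem convex_aux (f : ℕ → ℤ) (i j : ℕ)
    (hf : ∀ m, i < m → m < j → 2 * f m ≤ f (m - 1) + f (m + 1))
    (hij : f j ≤ f i) (m : ℕ) (h1 : i ≤ m) (h2 : m ≤ j) : f m ≤ f i := by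
  have step : ∀ t, i + t < j → f i < f (i + t) → f (i + t) < f (i + t + 1) := by
    intro t
    induction t with
    | zero => intro _ h; simp at h
    | succ t ih =>
      intro h3 h4
      have h5 := hf (i + (t + 1)) (by omega) h3
      have e1 : i + (t + 1) - 1 = i + t := by omega
      rw [e1] at h5
      have h6 : f (i + t) < f (i + (t + 1)) := by
        by_cases h : f i < f (i + t)
        · exact ih (by omega) h
        · omega
      omega
  by_contra hcon
  push Not at hcon
  have up : ∀ s, m + s ≤ j → f i < f (m + s) := by
    intro s
    induction s with
    | zero => intro _; exact hcon
    | succ s ih =>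
      intro h3
      have h4 := ih (by omega)
      have e1 : m + s = i + (m + s - i) := by omega
      have h5 := step (m + s - i) (by omega) (by rw [← e1]; exact h4)
      rw [← e1] at h5
      exact h4.trans h5
  have := up (j - m) (by omega)
  rw [Nat.add_sub_cancel' h2] at this
  omega

theorem mono_aux (f : ℕ → ℤ) (e : ℕ) (h : ∀ i, 1 ≤ i → i < e → f i < f (i + 1))
    (i j : ℕ) (hi : 1 ≤ i) (hij : i < j) (hj : j ≤ e) : f i < f j := by
  induction j, hij using Nat.le_induction with
  | base => exact h i hi (by omega)
  | succ n hn ih => exact (ih (by omega)).trans (h n (by omega) (by omega))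

/-- let r¹,…,rᵉ (e ≥ 4) be the ordered Hilbert basis of
σ^∨ ∩ ℤ² (lattice points on the compact edges of conv(σ^∨ ∩ ℤ² \ {0})),
with r^{i-1} + r^{i+1} = a_i·r^i, a_i ≥ 2, and central index c
(so r¹ + rᵉ ∈ ℕ·r^c).  Then no pair r^i, r^j with i < c < j satisfies
(a_c - 1)·r^c - (r^i + r^j) ∈ σ^∨. -/
theorem stmt17 (e : ℕ) (he : 4 ≤ e) (α β : ℤ × ℤ)
    (hdet : α.1 * β.2 - α.2 * β.1 ≠ 0)
    (r : ℕ → ℤ × ℤ) (a : ℕ → ℤ)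
    -- all r^i belong to σ^∨ ∩ ℤ²
    (hdual : ∀ i, 1 ≤ i → i ≤ e → inDual α β (r i))
    -- r¹ and rᵉ lie on the two rays of σ^∨
    (hr1 : pairZ α (r 1) = 0) (hre : pairZ β (r e) = 0)
    -- the r^i are ordered along the boundary: ⟨α,·⟩ grows, ⟨β,·⟩ decreases
    (hmonα : ∀ i, 1 ≤ i → i < e → pairZ α (r i) < pairZ α (r (i + 1)))
    (hmonβ : ∀ i, 1 ≤ i → i < e → pairZ β (r (i + 1)) < pairZ β (r i))
    -- consecutive elements form a ℤ-basis of ℤ²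
    (hbasis : ∀ i, 1 ≤ i → i < e →
      |(r i).1 * (r (i + 1)).2 - (r i).2 * (r (i + 1)).1| = 1)
    -- the continued-fraction relations r^{i-1} + r^{i+1} = a_i · r^i, a_i ≥ 2
    (hrel : ∀ i, 2 ≤ i → i ≤ e - 1 →
      r (i - 1) + r (i + 1) = a i • r i ∧ 2 ≤ a i)
    -- c is the central index: r¹ + rᵉ ∈ ℕ · r^c
    (c : ℕ) (hc1 : 1 < c) (hce : c < e)
    (hcentral : ∃ k : ℕ, r 1 + r e = (k : ℤ) • r c) :
    ¬ ∃ i j : ℕ, 1 ≤ i ∧ i < c ∧ c < j ∧ j ≤ e ∧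
      inDual α β ((a c - 1) • r c - (r i + r j)) := by
  rintro ⟨i, j, hi, hic, hcj, hj, hA, hB⟩
  have hAij := mono_aux (fun n => pairZ α (r n)) e hmonα i j hi (by omega) hj
  have hBij := mono_aux (fun n => - pairZ β (r n)) e
    (fun n h1 h2 => neg_lt_neg (hmonβ n h1 h2)) i j hi (by omega) hj
  have hAc := mono_aux (fun n => pairZ α (r n)) e hmonα 1 c le_rfl hc1 hce.le
  rw [hr1] at hAc
  have hlin : ∀ γ : ℤ × ℤ, ∀ m, 2 ≤ m → m ≤ e - 1 →
      pairZ γ (r (m - 1)) + pairZ γ (r (m + 1)) = a m * pairZ γ (r m) := by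
    intro γ m h1 h2
    have h := (hrel m h1 h2).1
    have ha := congrArg Prod.fst h
    have hb := congrArg Prod.snd h
    simp only [Prod.fst_add, Prod.snd_add, Prod.smul_fst, Prod.smul_snd, smul_eq_mul] at ha hb
    unfold pairZ
    linear_combination γ.1 * ha + γ.2 * hb
  have hexp : ∀ γ : ℤ × ℤ, pairZ γ ((a c - 1) • r c - (r i + r j)) =
      (a c - 1) * pairZ γ (r c) - (pairZ γ (r i) + pairZ γ (r j)) := by
    intro γ
    simp only [pairZ, Prod.fst_add, Prod.snd_add, Prod.fst_sub, Prod.snd_sub, Prod.smul_fst,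
      Prod.smul_snd, smul_eq_mul]
    ring
  rw [hexp] at hA hB
  obtain ⟨s, hs⟩ : ∃ s, s = pairZ β (r i) - pairZ β (r j) := ⟨_, rfl⟩
  obtain ⟨t, ht⟩ : ∃ t, t = pairZ α (r j) - pairZ α (r i) := ⟨_, rfl⟩
  have hs0 : 0 < s := by omega
  have ht0 : 0 < t := by omega
  have hG : ∀ m, 2 ≤ m → m ≤ e - 1 →
      (s * pairZ α (r (m - 1)) + t * pairZ β (r (m - 1))) +
      (s * pairZ α (r (m + 1)) + t * pairZ β (r (m + 1))) =
      a m * (s * pairZ α (r m) + t * pairZ β (r m)) := by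
    intro m h1 h2
    linear_combination s * hlin α m h1 h2 + t * hlin β m h1 h2
  have hnn : ∀ m, 1 ≤ m → m ≤ e → 0 ≤ s * pairZ α (r m) + t * pairZ β (r m) := by
    intro m h1 h2
    obtain ⟨h3, h4⟩ := hdual m h1 h2
    positivity
  have heq : s * pairZ α (r j) + t * pairZ β (r j) = s * pairZ α (r i) + t * pairZ β (r i) := by
    rw [hs, ht]; ring
  have key := convex_aux (fun n => s * pairZ α (r n) + t * pairZ β (r n)) i j
    (by
      intro m h1 h2
      rw [hG m (by omega) (by omega)]
      exact mul_le_mul_of_nonneg_right (hrel m (by omega) (by omega)).2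
        (hnn m (by omega) (by omega))) heq.le
  have k1 := key (c - 1) (by omega) (by omega)
  have k2 := key (c + 1) (by omega) (by omega)
  have hGc := hG c (by omega) (by omega)
  have hpos : 0 < s * pairZ α (r c) + t * pairZ β (r c) := by
    have h4 := (hdual c (by omega) (by omega)).2
    positivity
  have m1 := mul_nonneg hs0.le hA
  have m2 := mul_nonneg ht0.le hB
  linarith
end
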